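/- Let m, n ≥ 1 be integers and let SL(n) denote the group of n×n complex matrices of determinant 1, topologized as a subspace of M_n. There exists a continuous spectrum-shrinking map φ : SL(n) → M_m if and only if n divides m; and when n divides m, every continuous spectrum-shrinking map φ : SL(n) → M_m satisfies k_{φ(X)} = (k_X)^{m/n} for all X ∈ SL(n) (in particular, sp(φ(X)) = sp(X) for all X). -/

import Mathlib

open Matrix

/-!
A matrix in `SL(n)` with `n` distinct eigenvalues is `S * diagonal l * S⁻¹` with `S` invertible,
`l` injective and `∏ i, l i = 1`. The space of such pairs `(S, l)` is connected: after taking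
logarithms of the eigenvalues the constraint `∏ i, l i = 1` becomes linear, and on every complex
line the inadmissible points are zeros of a non-zero entire function, hence countable. So for a
continuous spectrum-shrinking `φ` the multiplicity of `l i` as a root of the characteristic
polynomial of `φ (S * diagonal l * S⁻¹)` is a constant `a i`. Permuting the columns of `S` together
with the entries of `l` does not change the matrix, so all `a i` equal one number `k`, that is,
the characteristic polynomial of `φ X` is the `k`-th power of that of `X`. Matrices with distinct
eigenvalues are dense, so this persists on all of `SL(n)`, and degrees give `m = n * k`. Conversely,
`X ↦ X ⊕ ⋯ ⊕ X` is spectrum-shrinking when `n ∣ m`.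
-/

open Polynomial Topology Filter

section Polynomial

variable {ι R : Type*} [Fintype ι] [CommRing R] [IsDomain R]

theorem rootMultiplicity_prod_X_sub_C_pow {l : ι → R} (hl : l.Injective) (a : ι → ℕ) (j : ι) :
    (∏ i, (X - C (l i)) ^ a i).rootMultiplicity (l j) = a j := by
  classical
  have hne : ∏ i, (X - C (l i)) ^ a i ≠ 0 :=
    Finset.prod_ne_zero_iff.2 fun i _ => pow_ne_zero _ (X_sub_C_ne_zero _)
  rw [← count_roots, roots_prod _ _ hne, Multiset.count_bind, Finset.sum_map_val]
  simp [Multiset.count_singleton, hl.eq_iff]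

theorem eq_prod_X_sub_C_pow_rootMultiplicity {p : R[X]} (hp : p.Monic) (hs : p.Splits)
    {l : ι → R} (hl : l.Injective) (hroots : {x | p.IsRoot x} ⊆ Set.range l) :
    p = ∏ i, (X - C (l i)) ^ p.rootMultiplicity (l i) := by
  classical
  have hsub : p.roots.toFinset ⊆ Finset.univ.image l := fun x hx => by
    simpa using hroots (isRoot_of_mem_roots (Multiset.mem_toFinset.1 hx))
  calc p = (p.roots.map fun x => X - C x).prod := by
        simpa [hp.leadingCoeff] using hs.eq_prod_roots
    _ = ∏ x ∈ p.roots.toFinset, (X - C x) ^ p.rootMultiplicity x :=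
        prod_multiset_root_eq_finset_root
    _ = ∏ x ∈ Finset.univ.image l, (X - C x) ^ p.rootMultiplicity x :=
        Finset.prod_subset hsub fun x _ hx => by
          rw [← count_roots, Multiset.count_eq_zero_of_notMem (by simpa using hx), pow_zero]
    _ = ∏ i, (X - C (l i)) ^ p.rootMultiplicity (l i) := Finset.prod_image hl.injOn

end Polynomial

section Continuity

variable {U : Type*} [TopologicalSpace U]

theorem continuous_of_isClosed_preimage_singleton {β : Type*} [Finite β] [TopologicalSpace β]
    {f : U → β} (hf : ∀ b, IsClosed (f ⁻¹' {b})) : Continuous f :=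
  continuous_iff_isClosed.2 fun s _ => by
    rw [← Set.biUnion_preimage_singleton]
    exact s.toFinite.isClosed_biUnion fun b _ => hf b

theorem isClosed_setOf_polynomial_eq {R : Type*} [CommRing R] [IsDomain R] [Infinite R]
    [TopologicalSpace R] [T2Space R] {p q : U → R[X]} (hp : ∀ x, Continuous fun u => (p u).eval x)
    (hq : ∀ x, Continuous fun u => (q u).eval x) : IsClosed {u | p u = q u} := by
  have heq : {u | p u = q u} = ⋂ x, {u | (p u).eval x = (q u).eval x} := by
    ext u
    simpa using ⟨fun h x => by rw [h], Polynomial.funext⟩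
  rw [heq]
  exact isClosed_iInter fun x => isClosed_eq (hp x) (hq x)

theorem continuous_eval_charpoly {κ R : Type*} [Fintype κ] [DecidableEq κ] [CommRing R]
    [TopologicalSpace R] [IsTopologicalRing R] {g : U → Matrix κ κ R} (hg : Continuous g) (x : R) :
    Continuous fun u => (g u).charpoly.eval x := by
  simp only [eval_charpoly]
  fun_prop

theorem exists_charpoly_eq_prod_X_sub_C_pow {K ι κ : Type*} [Field K] [IsAlgClosed K]
    [TopologicalSpace K] [IsTopologicalRing K] [T2Space K] [Fintype ι] [Fintype κ] [DecidableEq κ]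
    [PreconnectedSpace U] {l : U → ι → K} (hlc : Continuous l) (hl : ∀ u, (l u).Injective)
    {g : U → Matrix κ κ K} (hg : Continuous g) (hspec : ∀ u, spectrum K (g u) ⊆ Set.range (l u)) :
    ∃ a : ι → ℕ, ∀ u, (g u).charpoly = ∏ i, (X - C (l u i)) ^ a i := by
  classical
  cases isEmpty_or_nonempty U with
  | inl _ => exact ⟨0, isEmptyElim⟩
  | inr hU =>
  have := IsAlgClosed.instInfinite (K := K)
  have hprod u := eq_prod_X_sub_C_pow_rootMultiplicity (charpoly_monic (g u))
    (IsAlgClosed.splits _) (hl u) fun x hx => hspec u (mem_spectrum_iff_isRoot_charpoly.2 hx)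
  have hlt u i : (g u).charpoly.rootMultiplicity (l u i) < Fintype.card κ + 1 := by
    rw [← count_roots, Nat.lt_succ_iff, ← charpoly_natDegree_eq_dim (g u)]
    exact (Multiset.count_le_card _ _).trans (card_roots' _)
  let mult (u : U) (i : ι) : Fin (Fintype.card κ + 1) := ⟨_, hlt u i⟩
  have hfiber b : mult ⁻¹' {b} = {u | (g u).charpoly = ∏ i, (X - C (l u i)) ^ (b i : ℕ)} := by
    ext u
    refine ⟨?_, fun h => ?_⟩
    · rintro rfl
      exact hprod u
    · ext i
      exact (congrArg (rootMultiplicity (l u i)) h).trans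
        (rootMultiplicity_prod_X_sub_C_pow (hl u) _ i)
  have hmult : Continuous mult := continuous_of_isClosed_preimage_singleton fun b => by
    rw [hfiber]
    refine isClosed_setOf_polynomial_eq (continuous_eval_charpoly hg) fun x => ?_
    simp only [eval_prod, eval_pow, eval_sub, eval_X, eval_C]
    fun_prop
  obtain ⟨u₀⟩ := hU
  refine ⟨fun i => mult u₀ i, fun u => ?_⟩
  rw [PreconnectedSpace.constant ‹_› hmult (x := u₀) (y := u)]
  exact hprod u

end Continuity

section Separable

variable {ι K : Type*} [Fintype ι] [DecidableEq ι] [Field K]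

theorem exists_eq_mul_diagonal_mul_inv_of_separable [IsAlgClosed K] {A : Matrix ι ι K}
    (hA : A.charpoly.Separable) :
    ∃ (S : Matrix ι ι K) (l : ι → K), S.det ≠ 0 ∧ l.Injective ∧ A = S * diagonal l * S⁻¹ := by
  classical
  have hcard : Fintype.card ι = Fintype.card A.charpoly.roots.toFinset := by
    rw [Fintype.card_coe, Multiset.toFinset_card_of_nodup (nodup_roots hA),
      ← (IsAlgClosed.splits A.charpoly).natDegree_eq_card_roots, charpoly_natDegree_eq_dim]
  let e := Fintype.equivOfCardEq hcard
  let l (i : ι) : K := e i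
  have hl : l.Injective := Subtype.val_injective.comp e.injective
  have heigen i : ∃ v, Module.End.HasEigenvector (toLin' A) (l i) v := by
    have hroot : A.charpoly.IsRoot (l i) :=
      isRoot_of_mem_roots (Multiset.mem_toFinset.1 (e i).2)
    rw [← mem_spectrum_iff_isRoot_charpoly, ← spectrum_toLin',
      ← Module.End.hasEigenvalue_iff_mem_spectrum] at hroot
    exact hroot.exists_hasEigenvector
  choose v hv using heigen
  have hunit : IsUnit (of v)ᵀ := linearIndependent_cols_iff_isUnit.1
    (Module.End.eigenvectors_linearIndependent' _ l hl v hv)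
  have hdet := (isUnit_iff_isUnit_det _).1 hunit
  have hmul : A * (of v)ᵀ = (of v)ᵀ * diagonal l := by
    ext i j
    rw [mul_diagonal, mul_comm]
    exact congrFun (hv j).apply_eq_smul i
  refine ⟨(of v)ᵀ, l, hdet.ne_zero, hl, ?_⟩
  rw [← hmul, mul_nonsing_inv_cancel_right _ _ hdet]

/-- The formal degree of `f.derivative` is taken to be `f.natDegree` so that the resultant commutes
with ring homomorphisms whatever the characteristic. -/
theorem isUnit_resultant_derivative_iff_separable {R : Type*} [CommRing R] {f : R[X]}
    (hf : f.Monic) :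
    IsUnit (resultant f f.derivative f.natDegree f.natDegree) ↔ f.Separable := by
  have hdeg : f.derivative.natDegree ≤ f.natDegree :=
    (natDegree_derivative_le f).trans (Nat.sub_le _ _)
  have hres := resultant_add_right_deg f f.derivative f.natDegree _
    (f.natDegree - f.derivative.natDegree) le_rfl
  rw [Nat.add_sub_cancel' hdeg, coeff_natDegree, hf.leadingCoeff, one_pow, one_mul] at hres
  rw [Separable, ← isUnit_resultant_iff_isCoprime hf, hres]

theorem finite_setOf_not_separable_map_eval {P : K[X][X]} (hP : P.Monic) {s : K}
    (hs : (P.map (evalRingHom s)).Separable) :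
    {t : K | ¬ (P.map (evalRingHom t)).Separable}.Finite := by
  let Q : K[X] := resultant P P.derivative P.natDegree P.natDegree
  have hQ t : Q.eval t ≠ 0 ↔ (P.map (evalRingHom t)).Separable := by
    rw [← isUnit_resultant_derivative_iff_separable (hP.map _), hP.natDegree_map,
      derivative_map, resultant_map_map, isUnit_iff_ne_zero, coe_evalRingHom]
  have hQ0 : Q ≠ 0 := fun h => (hQ s).2 hs (by rw [h, eval_zero])
  simpa only [← hQ, not_not] using! finite_setOfPred_isRoot hQ0

theorem finite_setOf_not_separable_charpoly_lineMap (A : Matrix ι ι K) {B : Matrix ι ι K}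
    (hB : B.charpoly.Separable) :
    {t : K | ¬ (AffineMap.lineMap A B t).charpoly.Separable}.Finite := by
  let L : Matrix ι ι K[X] := of fun i j => C (A i j) + X * C (B i j - A i j)
  have hL t : L.charpoly.map (evalRingHom t) = (AffineMap.lineMap A B t).charpoly := by
    rw [← charpoly_map]
    congr 1
    ext i j
    simp [L, AffineMap.lineMap_apply, add_comm]
  simp only [← hL]
  exact finite_setOf_not_separable_map_eval (charpoly_monic L) (s := 1) (by simpa [hL] using hB)

theorem dense_setOf_separable_charpoly {𝕜 : Type*} [NontriviallyNormedField 𝕜] :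
    Dense {A : Matrix ι ι 𝕜 | A.charpoly.Separable} := by
  intro A
  have := NontriviallyNormedField.infinite 𝕜
  let D : Matrix ι ι 𝕜 := diagonal fun i =>
    Infinite.natEmbedding 𝕜 (Fintype.equivFin ι i)
  have hD : D.charpoly.Separable := by
    rw [charpoly_diagonal, separable_prod_X_sub_C_iff]
    exact (Infinite.natEmbedding 𝕜).injective.comp
      (Fin.val_injective.comp (Fintype.equivFin ι).injective)
  have hdense : Dense {t : 𝕜 | ¬ (AffineMap.lineMap A D t).charpoly.Separable}ᶜ := by
    simpa [Set.compl_eq_univ_sdiff] using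
      dense_univ.sdiff_finite (finite_setOf_not_separable_charpoly_lineMap A hD)
  have hcont : Continuous (AffineMap.lineMap A D : 𝕜 →ᵃ[𝕜] Matrix ι ι 𝕜) :=
    AffineMap.lineMap_continuous
  simpa using map_mem_closure hcont (hdense 0) fun t ht => by simpa using ht

end Separable

section Connectedness

theorem countable_setOf_eq_zero_of_differentiable {f : ℂ → ℂ} (hf : Differentiable ℂ f) {w : ℂ}
    (hw : f w ≠ 0) : {z | f z = 0}.Countable := by
  have hcod : {z | f z = 0}ᶜ ∈ codiscrete ℂ :=
    (hf.differentiableOn.analyticOnNhd isOpen_univ).preimage_zero_mem_codiscrete hw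
  have h := mem_codiscrete'.1 hcod
  rw [compl_compl] at h
  exact (HereditarilyLindelofSpace.isLindelof _).countable_of_isDiscrete h.2

theorem isPreconnected_of_countable_lineMap_notMem {E : Type*} [AddCommGroup E] [Module ℂ E]
    [TopologicalSpace E] [IsTopologicalAddGroup E] [ContinuousSMul ℂ E] {s : Set E}
    (hs : ∀ x ∈ s, ∀ y ∈ s, {t : ℂ | AffineMap.lineMap x y t ∉ s}.Countable) :
    IsPreconnected s := by
  refine isPreconnected_of_forall_pair fun x hx y hy => ?_
  let line : ℂ → E := AffineMap.lineMap x y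
  have hconn : IsPreconnected (line ⁻¹' s) := by
    rw [← compl_compl (line ⁻¹' s)]
    exact ((hs x hx y hy).isConnected_compl_of_one_lt_rank (by simp)).isPreconnected
  exact ⟨line '' (line ⁻¹' s), Set.image_preimage_subset _ _, ⟨0, by simpa [line], by simp [line]⟩,
    ⟨1, by simpa [line], by simp [line]⟩, hconn.image _ AffineMap.lineMap_continuous.continuousOn⟩

theorem differentiable_det {𝕜 E ι : Type*} [NontriviallyNormedField 𝕜] [NormedAddCommGroup E]
    [NormedSpace 𝕜 E] [Fintype ι] [DecidableEq ι] {A : E → Matrix ι ι 𝕜}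
    (hA : ∀ i j, Differentiable 𝕜 fun x => A x i j) : Differentiable 𝕜 fun x => (A x).det := by
  simp only [det_apply]
  fun_prop

end Connectedness

section Eigendata

variable {ι K : Type*} [Fintype ι] [DecidableEq ι] [Field K]

variable (ι K) in
/-- Eigenbases with distinct eigenvalues for elements of `SL`: pairs `(S, l)` where the columns of
`S` are the eigenvectors and `l` lists the corresponding eigenvalues, of product `1`. -/
def simpleEigendata : Set (Matrix ι ι K × (ι → K)) :=
  {p | p.1.det ≠ 0 ∧ ∏ i, p.2 i = 1 ∧ p.2.Injective}

/-- The matrix `S * diagonal l * S⁻¹` with eigendata `(S, l)`, as an element of `SL`. -/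
noncomputable def ofSimpleEigendata (p : simpleEigendata ι K) : SpecialLinearGroup ι K :=
  ⟨p.1.1 * diagonal p.1.2 * p.1.1⁻¹, by
    rw [det_conj ((isUnit_iff_isUnit_det _).2 p.2.1.isUnit), det_diagonal, p.2.2.1]⟩

theorem charpoly_ofSimpleEigendata (p : simpleEigendata ι K) :
    (ofSimpleEigendata p).1.charpoly = ∏ i, (X - C (p.1.2 i)) := by
  obtain ⟨S, hS⟩ := (isUnit_iff_isUnit_det _).2 p.2.1.isUnit
  change (p.1.1 * diagonal p.1.2 * p.1.1⁻¹).charpoly = _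
  rw [← hS, charpoly_units_conj, charpoly_diagonal]

theorem spectrum_ofSimpleEigendata (p : simpleEigendata ι K) :
    spectrum K (ofSimpleEigendata p).1 = Set.range p.1.2 := by
  ext x
  rw [mem_spectrum_iff_isRoot_charpoly, charpoly_ofSimpleEigendata]
  simp [IsRoot, eval_prod, Finset.prod_eq_zero_iff, sub_eq_zero, @eq_comm _ x]

theorem continuous_ofSimpleEigendata [TopologicalSpace K] [IsTopologicalDivisionRing K] :
    Continuous (ofSimpleEigendata : simpleEigendata ι K → SpecialLinearGroup ι K) := by
  have hinv : Continuous fun p : simpleEigendata ι K => p.1.1⁻¹ := by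
    simp only [inv_def, Ring.inverse_eq_inv']
    have hdet : Continuous fun p : simpleEigendata ι K => p.1.1.det⁻¹ :=
      Continuous.inv₀ (by fun_prop) fun p => p.2.1
    fun_prop
  refine Continuous.subtype_mk ?_ _
  fun_prop

theorem exists_ofSimpleEigendata_eq_of_perm (p : simpleEigendata ι K) (σ : Equiv.Perm ι) :
    ∃ q : simpleEigendata ι K, q.1.2 = p.1.2 ∘ σ ∧ ofSimpleEigendata q = ofSimpleEigendata p := by
  let S := p.1.1.submatrix (Equiv.refl ι) σ
  have hdet : S.det ≠ 0 := by
    simpa only [S, ← isUnit_iff_ne_zero, ← isUnit_iff_isUnit_det, isUnit_submatrix_equiv]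
      using p.2.1
  refine ⟨⟨(S, p.1.2 ∘ σ), hdet, ?_, p.2.2.2.comp σ.injective⟩, rfl, Subtype.ext ?_⟩
  · exact (Equiv.prod_comp σ p.1.2).trans p.2.2.1
  · change S * diagonal (p.1.2 ∘ σ) * S⁻¹ = p.1.1 * diagonal p.1.2 * p.1.1⁻¹
    rw [inv_submatrix_equiv, ← submatrix_diagonal_equiv, submatrix_mul_equiv, submatrix_mul_equiv,
      Equiv.coe_refl, submatrix_id_id]

theorem exists_coe_ofSimpleEigendata_eq_smul [IsAlgClosed K] {A : Matrix ι ι K}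
    (hA : A.charpoly.Separable) {c : K} (hc : c ^ Fintype.card ι * A.det = 1) :
    ∃ p : simpleEigendata ι K, (ofSimpleEigendata p : Matrix ι ι K) = c • A := by
  obtain ⟨S, l, hS, hl, rfl⟩ := exists_eq_mul_diagonal_mul_inv_of_separable hA
  rw [det_conj ((isUnit_iff_isUnit_det _).2 hS.isUnit), det_diagonal] at hc
  have hinj : (c • l).Injective := by
    intro i j hij
    have hc0 : c ≠ 0 := by
      rintro rfl
      have := Fintype.card_pos_iff.2 ⟨i⟩
      simp [this.ne'] at hc
    exact hl (mul_left_cancel₀ hc0 hij)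
  refine ⟨⟨(S, c • l), hS, ?_, hinj⟩, ?_⟩
  · simpa [Finset.prod_mul_distrib] using hc
  · change S * diagonal (c • l) * S⁻¹ = c • (S * diagonal l * S⁻¹)
    rw [diagonal_smul, Matrix.mul_smul, Matrix.smul_mul]

end Eigendata

section ComplexEigendata

variable {ι : Type*} [Fintype ι] [DecidableEq ι]

variable (ι) in
/-- Logarithmic coordinates on `simpleEigendata ι ℂ`: the pairs `(S, μ)` for which
`(S, exp ∘ μ)` is eigendata and the logarithms `μ` sum to `0`. Unlike `∏ i, l i = 1`, the latter
condition holds along the complex line through any two points of the set. -/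
def logEigendata : Set (Matrix ι ι ℂ × (ι → ℂ)) :=
  {p | p.1.det ≠ 0 ∧ ∑ i, p.2 i = 0 ∧ (fun i => Complex.exp (p.2 i)).Injective}

theorem isPreconnected_logEigendata : IsPreconnected (logEigendata ι) := by
  refine isPreconnected_of_countable_lineMap_notMem fun p hp q hq => ?_
  let S (t : ℂ) : Matrix ι ι ℂ := AffineMap.lineMap p.1 q.1 t
  let μ (t : ℂ) : ι → ℂ := AffineMap.lineMap p.2 q.2 t
  let D (t : ℂ) : ℂ := (S t).det *
    ∏ x ∈ Finset.univ.offDiag, (Complex.exp (μ t x.1) - Complex.exp (μ t x.2))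
  have hD t : D t ≠ 0 ↔ (S t).det ≠ 0 ∧ (fun i => Complex.exp (μ t i)).Injective := by
    simp [D, Finset.prod_ne_zero_iff, sub_ne_zero, Function.Injective, not_imp_not]
  have hsum t : ∑ i, μ t i = 0 := by
    simp [μ, AffineMap.lineMap_apply, Finset.sum_add_distrib, ← Finset.mul_sum, hp.2.1, hq.2.1]
  have hmem t : AffineMap.lineMap p q t ∉ logEigendata ι ↔ D t = 0 := by
    rw [← not_iff_not, not_not, ← ne_eq, hD]
    simp [logEigendata, ← hsum t, AffineMap.lineMap_apply, S, μ]
  have hdiff : Differentiable ℂ D := by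
    have hS : Differentiable ℂ fun t => (S t).det := differentiable_det fun i j => by
      simp only [S, AffineMap.lineMap_apply, vsub_eq_sub, vadd_eq_add, Matrix.add_apply,
        Matrix.smul_apply, Matrix.sub_apply, smul_eq_mul]
      fun_prop
    simp only [D, μ, AffineMap.lineMap_apply, vsub_eq_sub, vadd_eq_add, Pi.add_apply,
      Pi.smul_apply, Pi.sub_apply, smul_eq_mul]
    fun_prop
  simp only [hmem]
  refine countable_setOf_eq_zero_of_differentiable hdiff (w := 0) ?_
  simpa [hD, S, μ] using ⟨hp.1, hp.2.2⟩

theorem exists_exp_comp_eq_of_prod_eq_one {ι : Type*} [Fintype ι] [Nonempty ι] {l : ι → ℂ}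
    (hl : ∏ i, l i = 1) :
    ∃ μ : ι → ℂ, ∑ i, μ i = 0 ∧ (fun i => Complex.exp (μ i)) = l := by
  classical
  obtain ⟨i₀⟩ := ‹Nonempty ι›
  have hlog i : Complex.exp (Complex.log (l i)) = l i :=
    Complex.exp_log (Finset.prod_ne_zero_iff.1 (hl ▸ one_ne_zero) i (Finset.mem_univ i))
  refine ⟨(fun i => Complex.log (l i)) - Pi.single i₀ (∑ i, Complex.log (l i)), by simp, ?_⟩
  ext i
  have hsum : Complex.exp (∑ i, Complex.log (l i)) = 1 := by
    rw [Complex.exp_sum, ← hl]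
    exact Finset.prod_congr rfl fun i _ => hlog i
  obtain rfl | hi := eq_or_ne i i₀
  · simp [Complex.exp_sub, hlog, hsum]
  · simp [hi, hlog]

theorem isPreconnected_simpleEigendata [Nonempty ι] : IsPreconnected (simpleEigendata ι ℂ) := by
  let expData (p : Matrix ι ι ℂ × (ι → ℂ)) : Matrix ι ι ℂ × (ι → ℂ) :=
    (p.1, fun i => Complex.exp (p.2 i))
  have himage : expData '' logEigendata ι = simpleEigendata ι ℂ := by
    ext p
    constructor
    · rintro ⟨q, hq, rfl⟩
      exact ⟨hq.1, by rw [← Complex.exp_sum, hq.2.1, Complex.exp_zero], hq.2.2⟩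
    · rintro ⟨hdet, hprod, hinj⟩
      obtain ⟨μ, hsum, hμ⟩ := exists_exp_comp_eq_of_prod_eq_one hprod
      exact ⟨(p.1, μ), ⟨hdet, hsum, hμ ▸ hinj⟩, Prod.ext rfl hμ⟩
  rw [← himage]
  exact isPreconnected_logEigendata.image _ (by fun_prop)

theorem denseRange_ofSimpleEigendata [Nonempty ι] :
    DenseRange (ofSimpleEigendata : simpleEigendata ι ℂ → SpecialLinearGroup ι ℂ) := by
  intro X
  let c (A : Matrix ι ι ℂ) : ℂ := A.det⁻¹ ^ (Fintype.card ι : ℂ)⁻¹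
  have hcdet {A : Matrix ι ι ℂ} (hA : A.det ≠ 0) : c A ^ Fintype.card ι * A.det = 1 := by
    rw [Complex.cpow_nat_inv_pow _ Fintype.card_ne_zero, inv_mul_cancel₀ hA]
  have hcont : Tendsto (fun A => c A • A) (𝓝 X.1) (𝓝 X.1) := by
    have hinv : ContinuousAt (fun A : Matrix ι ι ℂ => A.det⁻¹) X.1 :=
      ContinuousAt.inv₀ (by fun_prop) (by simp [X.2])
    have hc : ContinuousAt c X.1 := hinv.cpow continuousAt_const (by simp [X.2])
    have hX : c X.1 • X.1 = X.1 := by simp [c, X.2]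
    have hsmul : Tendsto (fun A => c A • A) (𝓝 X.1) (𝓝 (c X.1 • X.1)) := hc.smul continuousAt_id
    rwa [hX] at hsmul
  have hdet : ∀ᶠ A in 𝓝 X.1, A.det ≠ 0 :=
    (Continuous.matrix_det continuous_id).continuousAt.eventually_ne (by simp [X.2])
  have hsep := mem_closure_iff_frequently.1 (dense_setOf_separable_charpoly X.1)
  refine closure_subtype.2 (mem_closure_iff_frequently.2 (hcont.frequently ?_))
  refine (hsep.and_eventually hdet).mono fun A hA => ?_
  obtain ⟨p, hp⟩ := exists_coe_ofSimpleEigendata_eq_smul hA.1 (hcdet hA.2)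
  exact ⟨_, ⟨p, rfl⟩, hp⟩

end ComplexEigendata

section SpectrumShrinking

variable {ι κ : Type*} [Fintype ι] [DecidableEq ι] [Fintype κ] [DecidableEq κ]

/-- Maps from `SL` to matrices, possibly of another size, with `sp(φ(X)) ⊆ sp(X)` for all `X`. -/
def IsSpectrumShrinking {R : Type*} [CommRing R] (φ : SpecialLinearGroup ι R → Matrix κ κ R) :
    Prop :=
  ∀ X, spectrum R (φ X) ⊆ spectrum R (X : Matrix ι ι R)

theorem exists_continuous_isSpectrumShrinking {R : Type*} [CommRing R] [TopologicalSpace R]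
    (h : Fintype.card ι ∣ Fintype.card κ) :
    ∃ φ : SpecialLinearGroup ι R → Matrix κ κ R, Continuous φ ∧ IsSpectrumShrinking φ := by
  obtain ⟨k, hk⟩ := h
  let e : ι × Fin k ≃ κ := Fintype.equivOfCardEq (by simp [hk])
  let repeatBlock : Matrix ι ι R →ₐ[R] Matrix κ κ R :=
    (reindexAlgEquiv R R e).toAlgHom.comp
      (AlgHom.ofLinearMap
        { toFun A := blockDiagonal fun _ => A
          map_add' A B := blockDiagonal_add (fun _ => A) fun _ => B
          map_smul' c A := blockDiagonal_smul c fun _ => A }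
        blockDiagonal_one fun A B => blockDiagonal_mul (fun _ => A) fun _ => B)
  refine ⟨fun X => repeatBlock X, ?_, fun X => AlgHom.spectrum_apply_subset repeatBlock _⟩
  exact ((continuous_pi fun _ => continuous_subtype_val).matrix_blockDiagonal).matrix_reindex e e

theorem exists_charpoly_comp_ofSimpleEigendata_eq [Nonempty ι]
    {φ : SpecialLinearGroup ι ℂ → Matrix κ κ ℂ} (hφ : Continuous φ) (h : IsSpectrumShrinking φ) :
    ∃ a : ι → ℕ, ∀ p : simpleEigendata ι ℂ,
      (φ (ofSimpleEigendata p)).charpoly = ∏ i, (X - C (p.1.2 i)) ^ a i := by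
  have := isPreconnected_iff_preconnectedSpace.1 (isPreconnected_simpleEigendata (ι := ι))
  exact exists_charpoly_eq_prod_X_sub_C_pow (by fun_prop) (fun p => p.2.2.2)
    (hφ.comp continuous_ofSimpleEigendata)
    fun p => (h _).trans (spectrum_ofSimpleEigendata p).subset

theorem exponent_eq_of_charpoly_comp_ofSimpleEigendata {K : Type*} [Field K]
    {φ : SpecialLinearGroup ι K → Matrix κ κ K} {a : ι → ℕ} (p₀ : simpleEigendata ι K)
    (ha : ∀ p : simpleEigendata ι K,
      (φ (ofSimpleEigendata p)).charpoly = ∏ i, (X - C (p.1.2 i)) ^ a i) (i j : ι) :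
    a i = a j := by
  have hmult (p : simpleEigendata ι K) (i : ι) :
      (φ (ofSimpleEigendata p)).charpoly.rootMultiplicity (p.1.2 i) = a i := by
    rw [ha, rootMultiplicity_prod_X_sub_C_pow p.2.2.2]
  obtain ⟨q, hq, hqp⟩ := exists_ofSimpleEigendata_eq_of_perm p₀ (Equiv.swap i j)
  rw [← hmult q i, ← hmult p₀ j, hqp, hq, Function.comp_apply, Equiv.swap_apply_left]

theorem exists_charpoly_eq_charpoly_pow [Nonempty ι]
    {φ : SpecialLinearGroup ι ℂ → Matrix κ κ ℂ} (hφ : Continuous φ) (h : IsSpectrumShrinking φ) :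
    ∃ k, ∀ X, (φ X).charpoly = X.1.charpoly ^ k := by
  obtain ⟨a, ha⟩ := exists_charpoly_comp_ofSimpleEigendata_eq hφ h
  obtain ⟨p₀⟩ := (denseRange_ofSimpleEigendata (ι := ι)).nonempty
  obtain ⟨i₀⟩ := ‹Nonempty ι›
  have hclosed : IsClosed {X | (φ X).charpoly = X.1.charpoly ^ a i₀} :=
    isClosed_setOf_polynomial_eq (continuous_eval_charpoly hφ) fun x => by
      simp only [eval_pow]
      exact (continuous_eval_charpoly continuous_subtype_val x).pow _
  refine ⟨a i₀, fun X => denseRange_ofSimpleEigendata.induction_on X hclosed fun p => ?_⟩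
  rw [ha, charpoly_ofSimpleEigendata, ← Finset.prod_pow]
  simp only [exponent_eq_of_charpoly_comp_ofSimpleEigendata p₀ ha _ i₀]

theorem card_eq_mul_of_charpoly_eq_charpoly_pow {R : Type*} [CommRing R] [Nontrivial R]
    {A : Matrix ι ι R} {B : Matrix κ κ R} {k : ℕ} (h : B.charpoly = A.charpoly ^ k) :
    Fintype.card κ = Fintype.card ι * k := by
  rw [← charpoly_natDegree_eq_dim B, h, (charpoly_monic A).natDegree_pow,
    charpoly_natDegree_eq_dim, mul_comm]

theorem spectrum_eq_of_charpoly_eq_charpoly_pow {K : Type*} [Field K] {A : Matrix ι ι K}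
    {B : Matrix κ κ K} {k : ℕ} (hk : k ≠ 0) (h : B.charpoly = A.charpoly ^ k) :
    spectrum K B = spectrum K A := by
  ext x
  simp [mem_spectrum_iff_isRoot_charpoly, h, IsRoot, hk]

end SpectrumShrinking

/-- For integers `m, n ≥ 1`, there exists a continuous spectrum-shrinking
map `φ : SL(n) → M_m` iff `n ∣ m`; and when `n ∣ m`, every continuous spectrum-shrinking
`φ : SL(n) → M_m` satisfies `k_{φ(X)} = (k_X)^(m/n)` (in particular it preserves spectra). -/
theorem exists_continuous_spectrum_shrinker_SLn_iff (n m : ℕ) (hn : 1 ≤ n) (hm : 1 ≤ m) :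
    ((∃ φ : {X : Matrix (Fin n) (Fin n) ℂ // X.det = 1} → Matrix (Fin m) (Fin m) ℂ,
        Continuous φ ∧ ∀ X, spectrum ℂ (φ X) ⊆ spectrum ℂ X.val) ↔ n ∣ m) ∧
    (n ∣ m → ∀ φ : {X : Matrix (Fin n) (Fin n) ℂ // X.det = 1} → Matrix (Fin m) (Fin m) ℂ,
        Continuous φ → (∀ X, spectrum ℂ (φ X) ⊆ spectrum ℂ X.val) →
        ∀ X, (φ X).charpoly = X.val.charpoly ^ (m / n) ∧
          spectrum ℂ (φ X) = spectrum ℂ X.val) := by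
  have : NeZero n := ⟨by omega⟩
  have hpow (φ : SpecialLinearGroup (Fin n) ℂ → Matrix (Fin m) (Fin m) ℂ) (hφ : Continuous φ)
      (h : IsSpectrumShrinking φ) : ∃ k, m = n * k ∧ ∀ X, (φ X).charpoly = X.1.charpoly ^ k := by
    obtain ⟨k, hk⟩ := exists_charpoly_eq_charpoly_pow hφ h
    exact ⟨k, by simpa using card_eq_mul_of_charpoly_eq_charpoly_pow (hk 1), hk⟩
  refine ⟨⟨?_, fun hnm => ?_⟩, fun _ φ hφ h X => ?_⟩
  · rintro ⟨φ, hφ, h⟩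
    obtain ⟨k, hk, -⟩ := hpow φ hφ h
    exact ⟨k, hk⟩
  · exact exists_continuous_isSpectrumShrinking (by simpa using hnm)
  · obtain ⟨k, rfl, hk⟩ := hpow φ hφ h
    rw [Nat.mul_div_cancel_left k hn]
    exact ⟨hk X, spectrum_eq_of_charpoly_eq_charpoly_pow (by rintro rfl; simp at hm) (hk X)⟩
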